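/- Let T be a complete theory in a countable language. Then T has a model carrying a BP'-rank if and only if T has a model carrying a BP_0'-rank relative to some set of parameters. -/

import Mathlib

/-!
From left to right the same model and rank work, relative to all parameters: under Axioms 1.1 and
1.2 every definable set has finite degree (`hasFiniteDegree_of_axiom1_2`). Indeed, if `A` contained
arbitrarily many disjoint subsets of full rank, then after cutting `A` in two, one half would still
contain arbitrarily many of them; iterating yields infinitely many disjoint subsets of full rank,
against Axiom 1.2.

From right to left, let `r` be a `BP₀'`-rank on `M` relative to `C`. The language being countable,
the definability of rank uses only a countable set `D ⊆ C` of parameters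
(`Axiom2.exists_countable`). A `D`-definable set is a family indexed by a single `D`-definable
tuple, so it has finite degree. Hence isolated types over `D` are dense
(`isolatedDense_of_degreeApprox`): a `D`-definable set of minimal rank and then of minimal degree
cannot be split over `D`. As `L` and `D` are countable, `M` has an elementary substructure
`N ⊇ D` which is atomic over `D` (`IsolatedDense.exists_atomic`).

The rank restricts to `N`, a definable set of `N` receiving the rank of the set defined in `M` by
the same formula (`restrict`). All axioms pass to `N` directly except Axiom 1.2, which is
`succ_le_rk_of_isolated`: let `φ(x, a)` have rank `c` and contain infinitely many disjoint subsets
of rank at least `c`, all definable over `N`. The type of `a` over `D` is isolated by some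
`D`-definable set `χ`, and degree approximation gives `a₀ ∈ χ` such that `φ(x, a₀)` has finite
degree `d`. Now `φ(x, a)` has a partition into `d + 1` pieces of rank `c`. That such a partition
exists, given by fixed formulas with some parameters, is a `D`-definable property of `a`, so it
holds at `a₀` as well, a contradiction.
-/

open FirstOrder FirstOrder.Language Set Cardinal

universe u v w

namespace BP

variable {L : FirstOrder.Language.{u, v}} {M : Type w} [L.Structure M]

/-- A rank function on a structure `M`: it assigns to every subset of a finite Cartesian
power of `M` a value in `WithBot ℕ`, where by convention the empty set gets `⊥ = -∞`,
and every nonempty parametrically definable set gets a natural number value. -/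
structure RankFunction (L : FirstOrder.Language.{u, v}) (M : Type w) [L.Structure M] where
  rk : ∀ {n : ℕ}, Set (Fin n → M) → WithBot ℕ
  rk_empty : ∀ n : ℕ, rk (∅ : Set (Fin n → M)) = ⊥
  rk_ne_bot : ∀ {n : ℕ} (A : Set (Fin n → M)),
    Set.Definable (Set.univ : Set M) L A → A.Nonempty → rk A ≠ ⊥

/-- The member `S_b = φ[M, b]` of the uniformly definable family given by the
parameter-free formula `φ(x, y)`, at the parameter tuple `b`. -/
def fiber {n m : ℕ} (φ : L.Formula (Fin n ⊕ Fin m)) (b : Fin m → M) : Set (Fin n → M) :=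
  {x | φ.Realize (Sum.elim x b)}

namespace RankFunction

/-- Axiom 1.1 (weak monotonicity): `rk (A ∪ B) = max (rk A) (rk B)`. -/
def Axiom1_1 (r : RankFunction L M) : Prop :=
  ∀ {n : ℕ} (A B : Set (Fin n → M)),
    Set.Definable (Set.univ : Set M) L A → Set.Definable (Set.univ : Set M) L B →
      r.rk (A ∪ B) = max (r.rk A) (r.rk B)

/-- Axiom 1.2 (finite degree): if `A` contains infinitely many pairwise disjoint nonempty
definable subsets each of rank at least `n`, then `rk A ≥ n + 1`. -/
def Axiom1_2 (r : RankFunction L M) : Prop :=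
  ∀ {k : ℕ} (A : Set (Fin k → M)), Set.Definable (Set.univ : Set M) L A →
    ∀ n : ℕ,
      (∃ P : ℕ → Set (Fin k → M),
          (∀ i, Set.Definable (Set.univ : Set M) L (P i)) ∧ (∀ i, (P i).Nonempty) ∧
          (∀ i, P i ⊆ A) ∧ (Pairwise fun i j => Disjoint (P i) (P j)) ∧
          ∀ i, (n : WithBot ℕ) ≤ r.rk (P i)) →
        ((n + 1 : ℕ) : WithBot ℕ) ≤ r.rk A

/-- Axiom 1 (monotonicity of rank): `rk A ≥ n + 1` iff `A` contains infinitely many pairwise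
disjoint nonempty definable subsets each of rank at least `n`. -/
def Axiom1 (r : RankFunction L M) : Prop :=
  ∀ {k : ℕ} (A : Set (Fin k → M)), Set.Definable (Set.univ : Set M) L A →
    ∀ n : ℕ,
      (((n + 1 : ℕ) : WithBot ℕ) ≤ r.rk A ↔
        ∃ P : ℕ → Set (Fin k → M),
          (∀ i, Set.Definable (Set.univ : Set M) L (P i)) ∧ (∀ i, (P i).Nonempty) ∧
          (∀ i, P i ⊆ A) ∧ (Pairwise fun i j => Disjoint (P i) (P j)) ∧
          ∀ i, (n : WithBot ℕ) ≤ r.rk (P i))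

/-- Axiom 2 (definability of rank), relative to a parameter set `C`: for every uniformly
definable family `{S_b}` and every `k`, the set `{b | rk (S_b) = k}` is `C`-definable. -/
def Axiom2 (r : RankFunction L M) (C : Set M) : Prop :=
  ∀ {n m : ℕ} (φ : L.Formula (Fin n ⊕ Fin m)) (k : ℕ),
    Set.Definable C L {b : Fin m → M | r.rk (fiber φ b) = (k : WithBot ℕ)}

/-- Axiom 3 (additivity of rank): if `f` is a definable function from `A` onto `B` all of whose
fibers have rank `n`, then `rk A = rk B + n`. -/
def Axiom3 (r : RankFunction L M) : Prop :=
  ∀ {k l : ℕ} (A : Set (Fin k → M)) (B : Set (Fin l → M))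
    (f : (Fin k → M) → (Fin l → M)),
    Set.Definable (Set.univ : Set M) L A → Set.Definable (Set.univ : Set M) L B →
    Set.Definable (Set.univ : Set M) L
      {z : (Fin k ⊕ Fin l) → M | z ∘ Sum.inl ∈ A ∧ f (z ∘ Sum.inl) = z ∘ Sum.inr} →
    Set.MapsTo f A B → Set.SurjOn f A B →
    ∀ n : ℕ, (∀ b ∈ B, r.rk (A ∩ f ⁻¹' {b}) = (n : WithBot ℕ)) →
      r.rk A = r.rk B + (n : WithBot ℕ)

/-- Axiom 4 (elimination of infinite quantifiers): for every uniformly definable family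
`{S_b}` there is an integer `m₀` such that every `S_b` with at least `m₀` elements is
infinite (i.e. every finite `S_b` has fewer than `m₀` elements). -/
def Axiom4 (r : RankFunction L M) : Prop :=
  ∀ {n m : ℕ} (φ : L.Formula (Fin n ⊕ Fin m)), ∃ m₀ : ℕ,
    ∀ (b : Fin m → M) (h : (fiber φ b).Finite), h.toFinset.card < m₀

/-- `A` can be partitioned into `d` pairwise disjoint nonempty definable subsets, each of
the same rank as `A`. -/
def IsRankPartition (r : RankFunction L M) {k : ℕ} (A : Set (Fin k → M)) (d : ℕ) : Prop :=
  ∃ P : Fin d → Set (Fin k → M),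
    (∀ i, Set.Definable (Set.univ : Set M) L (P i)) ∧ (∀ i, (P i).Nonempty) ∧
    (∀ i, r.rk (P i) = r.rk A) ∧ (Pairwise fun i j => Disjoint (P i) (P j)) ∧
    (⋃ i, P i) = A

/-- `A` has degree `d`: it can be partitioned into `d` pairwise disjoint nonempty definable
pieces of full rank, but not into more. -/
def HasDegree (r : RankFunction L M) {k : ℕ} (A : Set (Fin k → M)) (d : ℕ) : Prop :=
  r.IsRankPartition A d ∧ ∀ d' : ℕ, r.IsRankPartition A d' → d' ≤ d

/-- `A` has finite degree. -/
def HasFiniteDegree (r : RankFunction L M) {k : ℕ} (A : Set (Fin k → M)) : Prop :=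
  ∃ d : ℕ, r.HasDegree A d

/-- The degree approximation property over `C`: in any uniformly definable family indexed by a
nonempty `C`-definable set, some member has finite degree. -/
def DegreeApprox (r : RankFunction L M) (C : Set M) : Prop :=
  ∀ {n m : ℕ} (A : Set (Fin m → M)), Set.Definable C L A → A.Nonempty →
    ∀ φ : L.Formula (Fin n ⊕ Fin m), ∃ a₀ ∈ A, r.HasFiniteDegree (fiber φ a₀)

/-- The splitting approximation property over `C`: in any uniformly definable family of
infinite sets indexed by a nonempty `C`-definable set, some member `S_b` contains a definable
subset of rank `rk (S_b) - 1`. -/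
def SplittingApprox (r : RankFunction L M) (C : Set M) : Prop :=
  ∀ {n m : ℕ} (B : Set (Fin m → M)), Set.Definable C L B → B.Nonempty →
    ∀ φ : L.Formula (Fin n ⊕ Fin m), (∀ b ∈ B, (fiber φ b).Infinite) →
      ∃ b ∈ B, ∃ S' : Set (Fin n → M), Set.Definable (Set.univ : Set M) L S' ∧
        S' ⊆ fiber φ b ∧ r.rk S' + 1 = r.rk (fiber φ b)

/-- A `BP'`-rank (relative to `C`): Axioms 1.1, 1.2, 2 (over `C`), and 4. -/
def IsBP'Rank (r : RankFunction L M) (C : Set M) : Prop :=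
  r.Axiom1_1 ∧ r.Axiom1_2 ∧ r.Axiom2 C ∧ r.Axiom4

/-- A `BP₀'`-rank relative to `C`: Axiom 1.1, the degree approximation property over `C`,
Axiom 2 over `C`, and Axiom 4. -/
def IsBP0'Rank (r : RankFunction L M) (C : Set M) : Prop :=
  r.Axiom1_1 ∧ r.DegreeApprox C ∧ r.Axiom2 C ∧ r.Axiom4

/-- A `BP`-rank: Axioms 1, 2, 3, and 4. -/
def IsBPRank (r : RankFunction L M) : Prop :=
  r.Axiom1 ∧ r.Axiom2 Set.univ ∧ r.Axiom3 ∧ r.Axiom4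

/-- A `BP₀`-rank relative to `C`: Axiom 1.1, degree approximation and splitting approximation
over `C`, Axiom 2 over `C`, Axiom 3, and Axiom 4. -/
def IsBP0Rank (r : RankFunction L M) (C : Set M) : Prop :=
  r.Axiom1_1 ∧ r.DegreeApprox C ∧ r.SplittingApprox C ∧ r.Axiom2 C ∧ r.Axiom3 ∧ r.Axiom4

/-- Generic indistinguishability: `x₁ ~ x₂` for `R` on `S` iff the set of `x ∈ S` where
`R x₁ x` and `R x₂ x` disagree has rank strictly less than the rank of `S`. -/
def GenIndist (r : RankFunction L M) {k : ℕ} (S : Set (Fin k → M))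
    (R : (Fin k → M) → (Fin k → M) → Prop) (x₁ x₂ : Fin k → M) : Prop :=
  r.rk {x | x ∈ S ∧ ¬(R x₁ x ↔ R x₂ x)} < r.rk S

/-- `A ≡ B`: the rank of the symmetric difference of `A` and `B` is strictly less than the
rank of their union. -/
def RkEquiv (r : RankFunction L M) {k : ℕ} (A B : Set (Fin k → M)) : Prop :=
  r.rk (symmDiff A B) < r.rk (A ∪ B)

end RankFunction

open RankFunction

/-- The canonical extension relation: `S ⊆ N^k` gets rank `n` if `S` is a member, at a
parameter `b*` in the canonical extension of the index set, of a uniformly definable family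
indexed by an `M`-definable set on whose `M`-points the rank is constantly `n`. -/
def CanonExtRank {N : Type w} [L.Structure N] (r : RankFunction L M) (_f : M ↪ₑ[L] N)
    {k : ℕ} (S : Set (Fin k → N)) (n : WithBot ℕ) : Prop :=
  ∃ (m l : ℕ) (φ : L.Formula (Fin k ⊕ Fin m)) (ψ : L.Formula (Fin m ⊕ Fin l))
    (c : Fin l → M),
    (∀ b : Fin m → M, ψ.Realize (Sum.elim b c) → r.rk (fiber φ b) = n) ∧
    ∃ b' : Fin m → N, ψ.Realize (Sum.elim b' (_f ∘ c)) ∧ S = fiber φ b'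

/-- `r'` is the canonical extension of `r` along the elementary embedding `f`. -/
def IsCanonExt {N : Type w} [L.Structure N] (r : RankFunction L M) (f : M ↪ₑ[L] N)
    (r' : RankFunction L N) : Prop :=
  ∀ {k : ℕ} (S : Set (Fin k → N)) (n : WithBot ℕ), CanonExtRank r f S n → r'.rk S = n

/-- A theory has the order property if some formula `φ(x̄; ȳ)` linearly orders pairs of
sequences of tuples in some model. -/
def HasOrderProperty (L : FirstOrder.Language.{0, 0}) (T : L.Theory) : Prop :=
  ∃ (n m : ℕ) (φ : L.Formula (Fin n ⊕ Fin m)) (N : Theory.ModelType.{0, 0, 0} T)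
    (a : ℕ → Fin n → N) (b : ℕ → Fin m → N),
    ∀ i j : ℕ, (φ.Realize (Sum.elim (a i) (b j)) ↔ i < j)

/-- A theory is stable if no formula has the order property. -/
def IsStableTheory (L : FirstOrder.Language.{0, 0}) (T : L.Theory) : Prop :=
  ¬ HasOrderProperty L T

/-- A theory is superstable if it is stable in every cardinal `κ ≥ 2 ^ ℵ₀`: over every
parameter set of size at most `κ` in a model, there are at most `κ` complete 1-types. -/
def IsSuperstableTheory (L : FirstOrder.Language.{0, 0}) (T : L.Theory) : Prop :=
  ∀ κ : Cardinal.{0}, 2 ^ Cardinal.aleph0 ≤ κ →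
    ∀ (N : Theory.ModelType.{0, 0, 0} T) (A : Set N), #A ≤ κ →
      #(((L[[A]]).completeTheory N).CompleteType (Fin 1)) ≤ κ

/-! ### Ranks and partitions -/

section Rank

variable {r : RankFunction L M} {k : ℕ}

theorem rk_mono (h : r.Axiom1_1) {A B : Set (Fin k → M)} (hA : (univ : Set M).Definable L A)
    (hB : (univ : Set M).Definable L B) (hAB : A ⊆ B) : r.rk A ≤ r.rk B := by
  have := h A B hA hB
  rw [union_eq_self_of_subset_left hAB] at this
  rw [this]
  exact le_max_left _ _

/-- Disjoint subsets of full rank extend to a partition into pieces of full rank: the part of `A`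
they leave uncovered is added to the first of them. Definability over a parameter set `B` is
preserved. -/
theorem exists_partition_of_disjoint_subsets (h : r.Axiom1_1) {B : Set M} {A : Set (Fin k → M)}
    (hA : B.Definable L A) {d : ℕ} (P : Fin (d + 1) → Set (Fin k → M))
    (hP : ∀ i, B.Definable L (P i)) (hne : ∀ i, (P i).Nonempty) (hsub : ∀ i, P i ⊆ A)
    (hdisj : Pairwise fun i j => Disjoint (P i) (P j)) (hrk : ∀ i, r.rk A ≤ r.rk (P i)) :
    ∃ Q : Fin (d + 1) → Set (Fin k → M), (∀ i, B.Definable L (Q i)) ∧ (∀ i, (Q i).Nonempty) ∧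
      (∀ i, r.rk (Q i) = r.rk A) ∧ (Pairwise fun i j => Disjoint (Q i) (Q j)) ∧
      (⋃ i, Q i) = A := by
  classical
  have hR : B.Definable L (⋃ i : Fin d, P i.succ) := definable_iUnion_of_finite fun i => hP _
  let Q : Fin (d + 1) → Set (Fin k → M) :=
    Fin.cons (A \ ⋃ i : Fin d, P i.succ) (fun i => P i.succ)
  have hQ : ∀ i, B.Definable L (Q i) := by
    intro i
    refine Fin.cases ?_ (fun i => ?_) i
    · exact hA.sdiff hR
    · exact hP _
  have hPQ : ∀ i, P i ⊆ Q i := by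
    intro i
    refine Fin.cases ?_ (fun i => ?_) i
    · intro x hx
      refine ⟨hsub _ hx, ?_⟩
      rw [mem_iUnion]
      rintro ⟨i, hi⟩
      exact (hdisj (Fin.succ_ne_zero i).symm).le_bot ⟨hx, hi⟩
    · exact subset_rfl
  have hQA : ∀ i, Q i ⊆ A := by
    intro i
    refine Fin.cases ?_ (fun i => ?_) i
    · exact sdiff_subset
    · exact hsub _
  have h0 : ∀ i : Fin d, Disjoint (Q 0) (Q i.succ) := by
    intro i
    rw [Set.disjoint_left]
    intro x hx hxi
    exact hx.2 (mem_iUnion.2 ⟨i, hxi⟩)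
  refine ⟨Q, hQ, fun i => (hne i).mono (hPQ i), fun i => le_antisymm ?_ ?_, ?_, ?_⟩
  · exact rk_mono h ((hQ i).mono (subset_univ _)) (hA.mono (subset_univ _)) (hQA i)
  · exact (hrk i).trans (rk_mono h ((hP i).mono (subset_univ _)) ((hQ i).mono (subset_univ _))
      (hPQ i))
  · intro i j
    refine Fin.cases ?_ (fun i => ?_) i <;> refine Fin.cases ?_ (fun j => ?_) j
    · intro h; exact absurd rfl h
    · intro _; exact h0 j
    · intro _; exact (h0 i).symm
    · intro hij; exact hdisj hij
  · refine subset_antisymm (iUnion_subset hQA) ?_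
    intro x hx
    by_cases hx' : x ∈ ⋃ i : Fin d, P i.succ
    · obtain ⟨i, hi⟩ := mem_iUnion.1 hx'
      exact mem_iUnion.2 ⟨i.succ, hi⟩
    · exact mem_iUnion.2 ⟨0, hx, hx'⟩

/-- `B` contains arbitrarily large finite families of pairwise disjoint definable subsets of rank
at least `n`. -/
def ManyPieces (r : RankFunction L M) (n : WithBot ℕ) (B : Set (Fin k → M)) : Prop :=
  ∀ d : ℕ, ∃ P : Fin d → Set (Fin k → M), (∀ i, (univ : Set M).Definable L (P i)) ∧
    (∀ i, P i ⊆ B) ∧ (∀ i, n ≤ r.rk (P i)) ∧ Pairwise fun i j => Disjoint (P i) (P j)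

/-- If a set with many pieces is cut in two, then one of the halves has many pieces, since every
piece meets one of the halves in full rank. -/
theorem ManyPieces.of_union (h : r.Axiom1_1) {n : WithBot ℕ} {X Y : Set (Fin k → M)}
    (hX : (univ : Set M).Definable L X) (hY : (univ : Set M).Definable L Y)
    (hXY : ManyPieces r n (X ∪ Y)) : ManyPieces r n X ∨ ManyPieces r n Y := by
  classical
  by_contra hcon
  rw [not_or] at hcon
  obtain ⟨h1, h2⟩ := hcon
  unfold ManyPieces at h1 h2
  push Not at h1 h2
  obtain ⟨d₁, h1⟩ := h1
  obtain ⟨d₂, h2⟩ := h2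
  obtain ⟨P, hP, hsub, hrk, hdisj⟩ := hXY (d₁ + d₂)
  let I : Finset (Fin (d₁ + d₂)) := Finset.univ.filter fun i => n ≤ r.rk (P i ∩ X)
  have hI : ∀ i, i ∉ I → n ≤ r.rk (P i ∩ Y) := by
    intro i hi
    have hi' : ¬ n ≤ r.rk (P i ∩ X) := by simpa [I] using hi
    have hu : P i = (P i ∩ X) ∪ (P i ∩ Y) := by
      rw [← inter_union_distrib_left, inter_eq_left.2 (hsub i)]
    have := hrk i
    rw [hu, h _ _ ((hP i).inter hX) ((hP i).inter hY), le_max_iff] at this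
    exact this.resolve_left hi'
  have key : ∀ (Z : Set (Fin k → M)) (d : ℕ) (J : Finset (Fin (d₁ + d₂))),
      (univ : Set M).Definable L Z → d ≤ J.card → (∀ i ∈ J, n ≤ r.rk (P i ∩ Z)) →
      ∃ Q : Fin d → Set (Fin k → M), (∀ i, (univ : Set M).Definable L (Q i)) ∧
        (∀ i, Q i ⊆ Z) ∧ (∀ i, n ≤ r.rk (Q i)) ∧ Pairwise fun i j => Disjoint (Q i) (Q j) := by
    intro Z d J hZ hd hJ
    let e := J.orderEmbOfCardLe hd
    refine ⟨fun i => P (e i) ∩ Z, fun i => (hP _).inter hZ, fun i => inter_subset_right,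
      fun i => hJ _ (Finset.orderEmbOfCardLe_mem J hd i), fun i j hij => ?_⟩
    exact (hdisj (fun h => hij (e.injective h))).mono inter_subset_left inter_subset_left
  have hcard : I.card + Iᶜ.card = d₁ + d₂ := by
    rw [Finset.card_add_card_compl]; simp
  rcases le_or_gt d₁ I.card with hd | hd
  · obtain ⟨Q, q1, q2, q3, q4⟩ := key X d₁ I hX hd (fun i hi => by simpa [I] using hi)
    exact h1 Q q1 q2 q3 q4
  · obtain ⟨Q, q1, q2, q3, q4⟩ := key Y d₂ Iᶜ hY (by omega)
      (fun i hi => hI i (by simpa using hi))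
    exact h2 Q q1 q2 q3 q4

/-- A definable set with many pieces of rank at least `n` contains infinitely many disjoint ones:
repeatedly cutting the current set in two and keeping a half with many pieces, the discarded
halves are disjoint and of rank at least `n`. -/
theorem ManyPieces.exists_seq (h : r.Axiom1_1) {n : WithBot ℕ} {A : Set (Fin k → M)}
    (hA : (univ : Set M).Definable L A) (hm : ManyPieces r n A) :
    ∃ P : ℕ → Set (Fin k → M), (∀ i, (univ : Set M).Definable L (P i)) ∧ (∀ i, P i ⊆ A) ∧
      (Pairwise fun i j => Disjoint (P i) (P j)) ∧ ∀ i, n ≤ r.rk (P i) := by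
  have step : ∀ B : {B : Set (Fin k → M) // (univ : Set M).Definable L B ∧ ManyPieces r n B},
      ∃ B' : {B : Set (Fin k → M) // (univ : Set M).Definable L B ∧ ManyPieces r n B},
        B'.1 ⊆ B.1 ∧ n ≤ r.rk (B.1 \ B'.1) := by
    rintro ⟨B, hB, hmB⟩
    obtain ⟨P, hP, hsub, hrk, hdisj⟩ := hmB 2
    have hY := hB.sdiff (hP 0)
    have hXY : P 0 ∪ B \ P 0 = B := union_sdiff_cancel (hsub 0)
    have h1 : n ≤ r.rk (B \ P 0) := by
      refine (hrk 1).trans (rk_mono h (hP 1) hY ?_)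
      intro x hx
      exact ⟨hsub 1 hx, fun h0 => (hdisj (show (0 : Fin 2) ≠ 1 by decide)).le_bot ⟨h0, hx⟩⟩
    have hmB' : ManyPieces r n (P 0 ∪ B \ P 0) := by rwa [hXY]
    rcases hmB'.of_union h (hP 0) hY with hX | hX
    · exact ⟨⟨P 0, hP 0, hX⟩, hsub 0, h1⟩
    · refine ⟨⟨B \ P 0, hY, hX⟩, sdiff_subset, ?_⟩
      simpa [sdiff_sdiff_cancel_left (hsub 0)] using hrk 0
  choose f hf1 hf2 using step
  let s : ℕ → {B : Set (Fin k → M) // (univ : Set M).Definable L B ∧ ManyPieces r n B} :=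
    fun i => f^[i] ⟨A, hA, hm⟩
  have hs : ∀ i, s (i + 1) = f (s i) := fun i => Function.iterate_succ_apply' f i _
  have hanti : Antitone fun i => (s i).1 := by
    refine antitone_nat_of_succ_le fun i => ?_
    change (s (i + 1)).1 ⊆ (s i).1
    rw [hs]; exact hf1 _
  have hlt : ∀ i j, i < j → Disjoint ((s i).1 \ (s (i + 1)).1) ((s j).1 \ (s (j + 1)).1) := by
    intro i j hij
    rw [Set.disjoint_left]
    intro x hx hx'
    exact hx.2 (hanti (Nat.succ_le_of_lt hij) hx'.1)
  refine ⟨fun i => (s i).1 \ (s (i + 1)).1, fun i => (s i).2.1.sdiff (s (i + 1)).2.1,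
    fun i => sdiff_subset.trans (hanti (Nat.zero_le i)), ?_, fun i => ?_⟩
  · intro i j hij
    rcases lt_or_gt_of_ne hij with h | h
    · exact hlt i j h
    · exact (hlt j i h).symm
  · simp only [hs]; exact hf2 _

theorem hasFiniteDegree_of_axiom1_2 (h : r.Axiom1_1) (h2 : r.Axiom1_2) {A : Set (Fin k → M)}
    (hA : (univ : Set M).Definable L A) : r.HasFiniteDegree A := by
  classical
  suffices hb : ∃ b, ∀ d, r.IsRankPartition A d → d ≤ b by
    obtain ⟨b, hb⟩ := hb
    have hex : ∃ d, r.IsRankPartition A d := by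
      rcases A.eq_empty_or_nonempty with rfl | hne
      · exact ⟨0, fun _ => ∅, fun i => i.elim0, fun i => i.elim0, fun i => i.elim0,
          fun i => i.elim0, by simp⟩
      · refine ⟨1, fun _ => A, fun _ => hA, fun _ => hne, fun _ => rfl, fun i j hij => ?_, ?_⟩
        · exact absurd (Subsingleton.elim i j) hij
        · exact iUnion_const A
    obtain ⟨d, hd⟩ := hex
    exact ⟨Nat.findGreatest (r.IsRankPartition A) b, Nat.findGreatest_spec (hb d hd) hd,
      fun d' hd' => Nat.le_findGreatest (hb d' hd') hd'⟩
  rcases A.eq_empty_or_nonempty with rfl | hne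
  · refine ⟨0, ?_⟩
    rintro d ⟨P, -, hne, -, -, hU⟩
    by_contra hd
    obtain ⟨x, hx⟩ := hne ⟨0, by omega⟩
    have : x ∈ ⋃ i, P i := mem_iUnion.2 ⟨_, hx⟩
    rw [hU] at this
    exact this
  obtain ⟨n, hn⟩ : ∃ n : ℕ, r.rk A = (n : WithBot ℕ) := by
    obtain ⟨n, hn⟩ := WithBot.ne_bot_iff_exists.1 (r.rk_ne_bot A hA hne)
    exact ⟨n, hn.symm⟩
  by_contra hcon
  push Not at hcon
  have hm : ManyPieces r n A := by
    intro d
    obtain ⟨d', ⟨P, hP, -, hrk, hdisj, hU⟩, hd⟩ := hcon d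
    refine ⟨fun i => P (Fin.castLE hd.le i), fun i => hP _, fun i => ?_, fun i => ?_, ?_⟩
    · rw [← hU]; exact subset_iUnion P _
    · rw [hrk, hn]
    · intro i j hij
      exact hdisj fun e => hij (Fin.castLE_injective _ e)
  obtain ⟨P, hP, hsub, hdisj, hrk⟩ := hm.exists_seq h hA
  have hPne : ∀ i, (P i).Nonempty := by
    intro i
    rw [nonempty_iff_ne_empty]
    intro he
    have := hrk i
    rw [he, r.rk_empty] at this
    exact WithBot.natCast_ne_bot n (le_bot_iff.1 this)
  have := h2 A hA n ⟨P, hP, hPne, hsub, hdisj, hrk⟩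
  rw [hn, Nat.cast_le] at this
  omega

end Rank

/-! ### Uniformly definable families -/

section Families

theorem definable_fiber {n m : ℕ} (φ : L.Formula (Fin n ⊕ Fin m)) (b : Fin m → M) {B : Set M}
    (hb : ∀ j, b j ∈ B) : B.Definable L (fiber φ b) := by
  rw [definable_iff_exists_formula_sum]
  refine ⟨φ.relabel (Sum.elim Sum.inr fun j => Sum.inl ⟨b j, hb j⟩), ?_⟩
  ext x
  simp only [fiber, mem_ofPred_eq, Formula.realize_relabel]
  refine iff_of_eq (congrArg _ ?_)
  ext i
  cases i <;> simp

/-- A finite family of sets definable over `B` is given by formulas sharing one finite tuple of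
parameters from `B`. -/
theorem exists_common_fiber {ι : Type*} [Finite ι] {n : ℕ} {B : Set M}
    {S : ι → Set (Fin n → M)} (hS : ∀ i, B.Definable L (S i)) :
    ∃ (m : ℕ) (b : Fin m → M) (φ : ι → L.Formula (Fin n ⊕ Fin m)),
      (∀ j, b j ∈ B) ∧ ∀ i, S i = fiber (φ i) b := by
  classical
  cases nonempty_fintype ι
  choose A hAB hA using fun i => definable_iff_finitely_definable.1 (hS i)
  let U : Finset M := Finset.univ.biUnion A
  have hU : ∀ i, (U : Set M).Definable L (S i) := fun i =>
    (hA i).mono (by exact_mod_cast Finset.subset_biUnion_of_mem A (Finset.mem_univ i))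
  choose ψ hψ using fun i => definable_iff_exists_formula_sum.1 (hU i)
  let e := U.equivFin
  refine ⟨U.card, fun j => e.symm j, fun i => (ψ i).relabel
    (Sum.elim (fun a => Sum.inr (e a)) Sum.inl), fun j => ?_, fun i => ?_⟩
  · have := (e.symm j).2
    obtain ⟨i, -, hi⟩ := Finset.mem_biUnion.1 this
    exact hAB i hi
  · rw [hψ i]
    ext x
    simp only [fiber, mem_ofPred_eq, Formula.realize_relabel]
    refine iff_of_eq (congrArg _ ?_)
    ext i
    cases i <;> simp

theorem exists_fiber {n : ℕ} {B : Set M} {S : Set (Fin n → M)} (hS : B.Definable L S) :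
    ∃ (m : ℕ) (b : Fin m → M) (φ : L.Formula (Fin n ⊕ Fin m)),
      (∀ j, b j ∈ B) ∧ S = fiber φ b := by
  obtain ⟨m, b, φ, hb, h⟩ := exists_common_fiber (ι := Unit) (fun _ => hS)
  exact ⟨m, b, φ (), hb, h ()⟩

theorem definable_setOf_realize {α : Type*} (B : Set M) (φ : L.Formula α) :
    B.Definable L {v : α → M | φ.Realize v} :=
  (empty_definable_iff.2 ⟨φ, rfl⟩ : (∅ : Set M).Definable L _).mono (empty_subset _)

theorem definable_singleton_tuple {m : ℕ} {B : Set M} {b : Fin m → M} (hb : ∀ j, b j ∈ B) :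
    B.Definable L ({b} : Set (Fin m → M)) := by
  have h : ({b} : Set (Fin m → M)) =
      ⋂ j : Fin m, (fun g : Fin m → M => g ∘ fun _ : Fin 1 => j) ⁻¹'
        {x | x 0 ∈ ({b j} : Set M)} := by
    ext x
    simp [funext_iff]
  rw [h]
  exact definable_iInter_of_finite fun j =>
    (Set.Definable.singleton_of_mem L (hb j) : B.Definable L _).preimage_comp _

end Families

/-! ### Isolated tuples -/

section Isolated

variable {α β : Type*} {D : Set M}

/-- The type of the tuple `a` over `D` is isolated, by the `D`-definable set `S`: every
`D`-definable set containing `a` contains `S`. -/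
def IsolatedBy (L : FirstOrder.Language.{u, v}) {M : Type w} [L.Structure M] (D : Set M)
    {α : Type*} (a : α → M) (S : Set (α → M)) : Prop :=
  D.Definable L S ∧ a ∈ S ∧ ∀ T, D.Definable L T → a ∈ T → S ⊆ T

/-- Some `D`-definable set isolates the type of `a` over `D`. -/
def Isolated (L : FirstOrder.Language.{u, v}) {M : Type w} [L.Structure M] (D : Set M)
    {α : Type*} (a : α → M) : Prop :=
  ∃ S, IsolatedBy L D a S

theorem IsolatedBy.of_mem {a w : α → M} {S : Set (α → M)} (h : IsolatedBy L D a S)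
    (hw : w ∈ S) : IsolatedBy L D w S := by
  refine ⟨h.1, hw, fun S' hS' hw' => h.2.2 S' hS' ?_⟩
  by_contra ha
  exact h.2.2 _ hS'.compl ha hw hw'

theorem Isolated.comp [Finite α] [Finite β] {a : β → M} (h : Isolated L D a) (f : α → β) :
    Isolated L D (a ∘ f) := by
  obtain ⟨S, hS, ha, hmin⟩ := h
  refine ⟨(fun g : β → M => g ∘ f) '' S, hS.image_comp f, mem_image_of_mem _ ha, ?_⟩
  rintro S' hS' ha'
  rw [image_subset_iff]
  exact hmin _ (hS'.preimage_comp f) ha'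

/-- Isolated types over `D` are dense in every finite arity. -/
def IsolatedDense (L : FirstOrder.Language.{u, v}) {M : Type w} [L.Structure M] (D : Set M) :
    Prop :=
  ∀ (n : ℕ) (S : Set (Fin n → M)), D.Definable L S → S.Nonempty → ∃ a ∈ S, Isolated L D a

/-- If the type of `a` is isolated and `R` has a point over `a`, then `R` has such a point of
isolated type: choose one over some realization of the isolating set and transport it to `a`. -/
theorem IsolatedDense.exists_snoc (hD : IsolatedDense L D) {t : ℕ} {a : Fin t → M}
    (ha : Isolated L D a) {R : Set (Fin (t + 1) → M)} (hR : D.Definable L R) {x : M}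
    (hx : (Fin.snoc a x : Fin (t + 1) → M) ∈ R) :
    ∃ y : M, (Fin.snoc a y : Fin (t + 1) → M) ∈ R ∧
      Isolated L D (Fin.snoc a y : Fin (t + 1) → M) := by
  obtain ⟨χ, hχ, haχ, hmin⟩ := ha
  have hpre : D.Definable L ((fun g : Fin (t + 1) → M => g ∘ Fin.castSucc) ⁻¹' χ) :=
    hχ.preimage_comp _
  have hsn : ∀ y : M, (Fin.snoc a y : Fin (t + 1) → M) ∘ Fin.castSucc = a := by
    intro y; ext i; simp
  obtain ⟨e, ⟨heR, heχ⟩, S, hS⟩ := hD _ _ (hR.inter hpre) ⟨_, hx, by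
    change _ ∘ _ ∈ χ
    rw [hsn]; exact haχ⟩
  have hW := (hS.1.inter hR).image_comp (Fin.castSucc : Fin t → Fin (t + 1))
  have haW : a ∈ (fun g : Fin (t + 1) → M => g ∘ Fin.castSucc) '' (S ∩ R) := by
    by_contra hcon
    exact hmin _ hW.compl hcon heχ ⟨e, ⟨hS.2.1, heR⟩, rfl⟩
  obtain ⟨w, ⟨hwS, hwR⟩, hwa⟩ := haW
  have hw : (Fin.snoc a (w (Fin.last t)) : Fin (t + 1) → M) = w := by
    rw [← hwa]
    exact Fin.snoc_init_self w
  exact ⟨w (Fin.last t), by rwa [hw], by rw [hw]; exact ⟨S, hS.of_mem hwS⟩⟩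

theorem exists_enum_definable [Countable L.Symbols] (hD : D.Countable) (n : ℕ) :
    ∃ R : ℕ → Set (Fin n → M), (∀ q, D.Definable L (R q)) ∧
      ∀ S, D.Definable L S → ∃ q, S = R q := by
  have : Countable D := hD.to_subtype
  obtain ⟨f, hf⟩ := exists_surjective_nat (L[[D]].Formula (Fin n))
  refine ⟨fun q => Set.ofPred (f q).Realize, fun q => ⟨f q, rfl⟩, ?_⟩
  rintro S ⟨φ, rfl⟩
  obtain ⟨q, rfl⟩ := hf φ
  exact ⟨q, rfl⟩

/-- The points of an atomic model: a sequence all of whose initial segments have isolated type over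
`D` and which meets every nonempty set definable over `D` and an initial segment. -/
theorem IsolatedDense.exists_seq [Countable L.Symbols] [Nonempty M] (hcount : D.Countable)
    (hD : IsolatedDense L D) :
    ∃ s : ℕ → M, (∀ t, Isolated L D (fun i : Fin t => s i)) ∧
      ∀ (t : ℕ) (R : Set (Fin (t + 1) → M)), D.Definable L R → ∀ x : M,
        (Fin.snoc (fun i : Fin t => s i) x : Fin (t + 1) → M) ∈ R →
        ∃ j, (Fin.snoc (fun i : Fin t => s i) (s j) : Fin (t + 1) → M) ∈ R := by
  classical
  choose R hR hRall using fun n => exists_enum_definable (L := L) hcount n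
  -- At stage `t = pair k q` the `q`-th `D`-definable set in `k + 1` variables is treated, over the
  -- first `k ≤ t` members of the sequence.
  let c (t : ℕ) : Fin ((Nat.unpair t).1 + 1) → Fin (t + 1) :=
    Fin.snoc (fun i => Fin.castSucc (Fin.castLE (Nat.unpair_left_le t) i)) (Fin.last t)
  let task (t : ℕ) : Set (Fin (t + 1) → M) :=
    (fun g : Fin (t + 1) → M => g ∘ c t) ⁻¹' R ((Nat.unpair t).1 + 1) (Nat.unpair t).2
  have hc : ∀ t (a : Fin t → M) (x : M), (Fin.snoc a x : Fin (t + 1) → M) ∘ c t =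
      Fin.snoc (fun i => a (Fin.castLE (Nat.unpair_left_le t) i)) x := by
    intro t a x
    ext i
    refine Fin.lastCases ?_ (fun i => ?_) i
    · simp [c]
    · simp only [c, Function.comp_apply, Fin.snoc_castSucc]
  have step : ∀ t (a : {a : Fin t → M // Isolated L D a}), ∃ y : M,
      Isolated L D (Fin.snoc a.1 y : Fin (t + 1) → M) ∧
      ∀ x : M, (Fin.snoc a.1 x : Fin (t + 1) → M) ∈ task t →
        (Fin.snoc a.1 y : Fin (t + 1) → M) ∈ task t := by
    rintro t ⟨a, ha⟩
    by_cases hx : ∃ x : M, (Fin.snoc a x : Fin (t + 1) → M) ∈ task t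
    · obtain ⟨x, hx⟩ := hx
      obtain ⟨y, hy, hy'⟩ := hD.exists_snoc ha ((hR _ _).preimage_comp (c t)) hx
      exact ⟨y, hy', fun _ _ => hy⟩
    · obtain ⟨y, -, hy'⟩ := hD.exists_snoc ha definable_univ (mem_univ _)
        (x := Classical.arbitrary M)
      exact ⟨y, hy', fun x hx' => absurd ⟨x, hx'⟩ hx⟩
  choose g hg1 hg2 using step
  have h0 : Isolated L D (Fin.elim0 : Fin 0 → M) := by
    obtain ⟨a, -, ha⟩ := hD 0 univ definable_univ ⟨Fin.elim0, mem_univ _⟩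
    rwa [Subsingleton.elim (Fin.elim0 : Fin 0 → M) a]
  let f : ∀ t, {a : Fin t → M // Isolated L D a} := fun t =>
    Nat.rec ⟨Fin.elim0, h0⟩ (fun t a => ⟨Fin.snoc a.1 (g t a), hg1 t a⟩) t
  let s : ℕ → M := fun t => g t (f t)
  have hf : ∀ t, (f t).1 = fun i : Fin t => s i := by
    intro t
    induction t with
    | zero => exact Subsingleton.elim _ _
    | succ t ih =>
      have : (f (t + 1)).1 = Fin.snoc (f t).1 (s t) := rfl
      rw [this, ih]
      ext i
      refine Fin.lastCases ?_ (fun i => ?_) i <;> simp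
  refine ⟨s, fun t => hf t ▸ (f t).2, fun k S hS x hx => ?_⟩
  obtain ⟨q, rfl⟩ := hRall _ S hS
  obtain ⟨t, ht⟩ : ∃ t, t = Nat.pair k q := ⟨_, rfl⟩
  have hk : (Nat.unpair t).1 = k := by simp [ht]
  have hq : (Nat.unpair t).2 = q := by simp [ht]
  subst hk hq
  have hmem : ∀ y : M, (Fin.snoc (f t).1 y : Fin (t + 1) → M) ∈ task t ↔
      (Fin.snoc (fun i : Fin (Nat.unpair t).1 => s i) y : Fin ((Nat.unpair t).1 + 1) → M) ∈
        R ((Nat.unpair t).1 + 1) (Nat.unpair t).2 := by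
    intro y
    change (Fin.snoc (f t).1 y : Fin (t + 1) → M) ∘ c t ∈ R _ _ ↔ _
    rw [hc, hf]
    rfl
  exact ⟨t, (hmem _).1 (hg2 t (f t) x ((hmem x).2 hx))⟩

/-- If `L` and `D` are countable and isolated types over `D` are dense, there is an elementary
substructure containing `D` all of whose finite tuples have isolated type over `D`. -/
theorem IsolatedDense.exists_atomic [Countable L.Symbols] [Nonempty M] (hcount : D.Countable)
    (hD : IsolatedDense L D) :
    ∃ N : L.ElementarySubstructure M, D ⊆ (N : Set M) ∧
      ∀ (m : ℕ) (b : Fin m → M), (∀ j, b j ∈ N) → Isolated L D b := by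
  obtain ⟨s, hs, hmeet⟩ := hD.exists_seq hcount
  -- Finitely many members of the sequence lie in a common initial segment.
  have hseg : ∀ (m : ℕ) (b : Fin m → M), (∀ j, b j ∈ range s) →
      ∃ (t : ℕ) (f : Fin m → Fin t), b = (fun i : Fin t => s i) ∘ f := by
    intro m b hb
    choose i hi using hb
    refine ⟨Finset.univ.sup i + 1, fun j => ⟨i j, ?_⟩, ?_⟩
    · exact Nat.lt_succ_of_le (Finset.le_sup (Finset.mem_univ j))
    · ext j; exact (hi j).symm
  have hmeets : L.MeetsDefinable (range s) := by
    rintro S ⟨x, hx⟩ hS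
    obtain ⟨m, b, φ, hb, hφ⟩ := exists_fiber hS
    obtain ⟨t, f, rfl⟩ := hseg m b hb
    have key : ∀ y : M, y ∈ S ↔ (Fin.snoc (fun i : Fin t => s i) y : Fin (t + 1) → M) ∈
        {v : Fin (t + 1) → M | (φ.relabel (Sum.elim (fun _ => Fin.last t)
          fun j => Fin.castSucc (f j))).Realize v} := by
      intro y
      have : y ∈ S ↔ (fun _ : Fin 1 => y) ∈ {x : Fin 1 → M | x 0 ∈ S} := Iff.rfl
      rw [this, hφ]
      simp only [fiber, mem_ofPred_eq, Formula.realize_relabel]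
      refine iff_of_eq (congrArg _ ?_)
      ext i
      cases i <;> simp
    obtain ⟨j, hj⟩ := hmeet t _ (definable_setOf_realize D _) x ((key x).1 hx)
    exact ⟨s j, (key _).2 hj, mem_range_self j⟩
  have hN : ∀ x, x ∈ hmeets.toElementarySubstructure ↔ x ∈ range s := by
    intro x
    have := hmeets.closure_eq_self
    rw [Set.ext_iff] at this
    exact this x
  refine ⟨hmeets.toElementarySubstructure, fun x hx => ?_, fun m b hb => ?_⟩
  · refine (hN x).2 ?_
    obtain ⟨j, hj⟩ := hmeet 0 _ (Set.Definable.singleton_of_mem L hx : D.Definable L _) x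
      (by simp [Fin.snoc])
    refine ⟨j, ?_⟩
    simpa [Fin.snoc] using hj
  · obtain ⟨t, f, rfl⟩ := hseg m b fun j => (hN _).1 (hb j)
    exact (hs t).comp f

end Isolated

/-! ### Consequences of the degree approximation property -/

section DegreeApproximation

variable {r : RankFunction L M} {D : Set M}

/-- A `D`-definable set constitutes by itself a family indexed by a `D`-definable singleton, so
degree approximation over `D` gives it finite degree. -/
theorem hasFiniteDegree_of_degreeApprox (h : r.DegreeApprox D) {n : ℕ} {S : Set (Fin n → M)}
    (hS : D.Definable L S) : r.HasFiniteDegree S := by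
  obtain ⟨m, b, φ, hb, rfl⟩ := exists_fiber hS
  obtain ⟨b', rfl, hb'⟩ := h {b} (definable_singleton_tuple hb) (singleton_nonempty b) φ
  exact hb'

theorem IsRankPartition.append {n d : ℕ} {A B : Set (Fin n → M)} (hA : r.IsRankPartition A d)
    (hB : (univ : Set M).Definable L B) (hBne : B.Nonempty) (hdisj : Disjoint A B)
    (hrA : r.rk A = r.rk (A ∪ B)) (hrB : r.rk B = r.rk (A ∪ B)) :
    r.IsRankPartition (A ∪ B) (d + 1) := by
  obtain ⟨P, hP, hne, hrk, hd, rfl⟩ := hA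
  have hB' : ∀ i, Disjoint (P i) B := fun i => hdisj.mono_left (subset_iUnion P i)
  refine ⟨Fin.cons B P, ?_, ?_, ?_, ?_, ?_⟩
  · exact fun i => Fin.cases hB hP i
  · exact fun i => Fin.cases hBne hne i
  · exact fun i => Fin.cases hrB (fun i => (hrk i).trans hrA) i
  · intro i j
    refine Fin.cases ?_ (fun i => ?_) i <;> refine Fin.cases ?_ (fun j => ?_) j
    · intro h; exact absurd rfl h
    · intro _; exact (hB' j).symm
    · intro _; exact hB' i
    · intro hij; exact hd fun e => hij (congrArg Fin.succ (Fin.ext (Fin.mk.inj e)))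
  · ext x
    simp [or_comm]

/-- A nonempty `D`-definable set all of whose nonempty `D`-definable subsets have its own rank `c`
contains an isolated tuple: a proper `D`-definable splitting strictly lowers the degree. -/
theorem exists_isolated_of_minimal {n : ℕ} {c : WithBot ℕ} (d : ℕ) :
    ∀ S : Set (Fin n → M), D.Definable L S → S.Nonempty →
      (∀ S', D.Definable L S' → S'.Nonempty → S' ⊆ S → r.rk S' = c) →
      (∀ d', r.IsRankPartition S d' → d' ≤ d) → ∃ a ∈ S, Isolated L D a := by
  induction d with
  | zero =>
    intro S hS hne hmin hd
    have : r.IsRankPartition S 1 := ⟨fun _ => S, fun _ => hS.mono (subset_univ _), fun _ => hne,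
      fun _ => rfl, fun i j hij => absurd (Subsingleton.elim i j) hij, iUnion_const S⟩
    exact absurd (hd 1 this) (by omega)
  | succ d ih =>
    intro S hS hne hmin hd
    obtain ⟨a, ha⟩ := hne
    by_cases hat : ∀ S', D.Definable L S' → a ∈ S' → S ⊆ S'
    · exact ⟨a, ha, S, hS, ha, hat⟩
    push Not at hat
    obtain ⟨S', hS', haS', hnot⟩ := hat
    obtain ⟨x, hx, hx'⟩ := not_subset.1 hnot
    have hU : S ∩ S' ∪ S \ S' = S := inter_union_sdiff S S'
    have hi := hS.inter hS'
    have hs := hS.sdiff hS'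
    have hrS := hmin S hS ⟨a, ha⟩ subset_rfl
    have hri := hmin _ hi ⟨a, ha, haS'⟩ inter_subset_left
    have hrs := hmin _ hs ⟨x, hx, hx'⟩ sdiff_subset
    obtain ⟨b, hb, hb'⟩ := ih (S ∩ S') hi ⟨a, ha, haS'⟩
      (fun T hT hTne hTS => hmin T hT hTne (hTS.trans inter_subset_left)) (fun d' hd' => by
        have := IsRankPartition.append hd' (hs.mono (subset_univ _)) ⟨x, hx, hx'⟩
          (disjoint_sdiff_right.mono_left inter_subset_right) (by rw [hU, hri, hrS])
          (by rw [hU, hrs, hrS])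
        rw [hU] at this
        exact Nat.le_of_succ_le_succ (hd _ this))
    exact ⟨b, hb.1, hb'⟩

/-- Degree approximation over `D` makes isolated types over `D` dense: inside a given set take a
`D`-definable subset of minimal rank. -/
theorem isolatedDense_of_degreeApprox (h1 : r.Axiom1_1) (h : r.DegreeApprox D) :
    IsolatedDense L D := by
  intro n S hS hne
  obtain ⟨c, ⟨S₀, hS₀, hne₀, hsub₀, rfl⟩, hmin⟩ :=
    wellFounded_lt.has_min {c : WithBot ℕ | ∃ S', D.Definable L S' ∧ S'.Nonempty ∧ S' ⊆ S ∧
      r.rk S' = c} ⟨_, S, hS, hne, subset_rfl, rfl⟩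
  obtain ⟨d, -, hd⟩ := hasFiniteDegree_of_degreeApprox h hS₀
  obtain ⟨a, ha, ha'⟩ := exists_isolated_of_minimal (c := r.rk S₀) d S₀ hS₀ hne₀
    (fun S' hS' hne' hsub' => le_antisymm
      (rk_mono h1 (hS'.mono (subset_univ _)) (hS₀.mono (subset_univ _)) hsub')
      (not_lt.1 (hmin _ ⟨S', hS', hne', hsub'.trans hsub₀, rfl⟩))) hd
  exact ⟨a, hsub₀ ha, ha'⟩

theorem Axiom2.exists_countable [Countable L.Symbols] {C : Set M} (h : r.Axiom2 C) :
    ∃ D ⊆ C, D.Countable ∧ r.Axiom2 D := by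
  choose A hAC hA using fun (n m : ℕ) (φ : L.Formula (Fin n ⊕ Fin m)) (k : ℕ) =>
    definable_iff_finitely_definable.1 (h φ k)
  refine ⟨⋃ n, ⋃ m, ⋃ φ, ⋃ k, (A n m φ k : Set M), ?_, ?_, ?_⟩
  · simp only [iUnion_subset_iff]
    exact hAC
  · exact countable_iUnion fun n => countable_iUnion fun m => countable_iUnion fun φ =>
      countable_iUnion fun k => (A n m φ k).countable_toSet
  · intro n m φ k
    refine (hA n m φ k).mono ?_
    exact subset_iUnion_of_subset n (subset_iUnion_of_subset m (subset_iUnion_of_subset φ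
      (subset_iUnion_of_subset k subset_rfl)))

theorem definable_mem_fiber {β : Type*} {n m : ℕ} (φ : L.Formula (Fin n ⊕ Fin m))
    (f : Fin n → β) (g : Fin m → β) :
    D.Definable L {u : β → M | u ∘ f ∈ fiber φ (u ∘ g)} := by
  have h := definable_setOf_realize D (φ.relabel (Sum.elim f g))
  convert! h using 1
  ext u
  simp only [fiber, mem_ofPred_eq, Formula.realize_relabel, Sum.comp_elim]

theorem definable_disjoint_fiber {n m : ℕ} (φ ψ : L.Formula (Fin n ⊕ Fin m)) :
    D.Definable L {e : Fin m → M | Disjoint (fiber φ e) (fiber ψ e)} := by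
  have h := (((definable_mem_fiber (D := D) φ (Sum.inr : Fin n → Fin m ⊕ Fin n) Sum.inl).inter
    (definable_mem_fiber ψ Sum.inr Sum.inl)).compl).forall_of_finite
  convert! h using 1
  ext e
  simp [Set.disjoint_left]

theorem definable_iUnion_fiber_eq {ι : Type*} [Finite ι] {n m m' : ℕ}
    (φ : L.Formula (Fin n ⊕ Fin m)) (ψ : ι → L.Formula (Fin n ⊕ Fin m')) :
    D.Definable L {v : Fin m ⊕ Fin m' → M |
      (⋃ i, fiber (ψ i) (v ∘ Sum.inr)) = fiber φ (v ∘ Sum.inl)} := by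
  have hX : D.Definable L (⋃ i, {u : (Fin m ⊕ Fin m') ⊕ Fin n → M |
      u ∘ Sum.inr ∈ fiber (ψ i) (u ∘ (Sum.inl ∘ Sum.inr))}) :=
    definable_iUnion_of_finite fun i => definable_mem_fiber (ψ i) Sum.inr (Sum.inl ∘ Sum.inr)
  have hY : D.Definable L {u : (Fin m ⊕ Fin m') ⊕ Fin n → M |
      u ∘ Sum.inr ∈ fiber φ (u ∘ (Sum.inl ∘ Sum.inl))} :=
    definable_mem_fiber φ Sum.inr (Sum.inl ∘ Sum.inl)
  have h := ((hX.inter hY).union (hX.compl.inter hY.compl)).forall_of_finite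
  convert! h using 1
  ext v
  simp [Set.ext_iff, ← Function.comp_assoc, iff_iff_and_or_not_and_not]

/-- The first-order content of the passage to an atomic model. If the parameters of `S` have
isolated type over `D`, then a bound for the degree of some member of the family of `S` over the
isolating set bounds the size of every partition of `S` into pieces of full rank: the existence of
a partition by given formulas is a `D`-definable condition on the parameters. -/
theorem succ_le_rk_of_isolated (h1 : r.Axiom1_1) (h2 : r.Axiom2 D) (h : r.DegreeApprox D)
    {N : Set M} (hN : ∀ (m : ℕ) (b : Fin m → M), (∀ j, b j ∈ N) → Isolated L D b)
    {n : ℕ} {S : Set (Fin n → M)} (hS : N.Definable L S) {c : ℕ} (P : ℕ → Set (Fin n → M))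
    (hP : ∀ i, N.Definable L (P i)) (hne : ∀ i, (P i).Nonempty) (hsub : ∀ i, P i ⊆ S)
    (hdisj : Pairwise fun i j => Disjoint (P i) (P j)) (hrk : ∀ i, (c : WithBot ℕ) ≤ r.rk (P i)) :
    ((c + 1 : ℕ) : WithBot ℕ) ≤ r.rk S := by
  by_contra hcon
  have hSu : (univ : Set M).Definable L S := hS.mono (subset_univ _)
  have hrS : r.rk S = (c : WithBot ℕ) := by
    have hle : (c : WithBot ℕ) ≤ r.rk S :=
      (hrk 0).trans (rk_mono h1 ((hP 0).mono (subset_univ _)) hSu (hsub 0))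
    obtain ⟨s, hs⟩ : ∃ s : ℕ, r.rk S = (s : WithBot ℕ) := by
      obtain ⟨s, hs⟩ := WithBot.ne_bot_iff_exists.1 (r.rk_ne_bot S hSu ((hne 0).mono (hsub 0)))
      exact ⟨s, hs.symm⟩
    rw [hs, Nat.cast_le] at hcon hle
    rw [hs, Nat.cast_inj]
    omega
  obtain ⟨m, a, φ, haN, rfl⟩ := exists_fiber hS
  obtain ⟨χ, hχ, haχ, hmin⟩ := hN m a haN
  obtain ⟨a₀, ha₀, d, -, hd⟩ := h χ hχ ⟨a, haχ⟩ φ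
  obtain ⟨Q, hQ, hQne, hQrk, hQdisj, hQU⟩ := exists_partition_of_disjoint_subsets h1 hS
    (fun i : Fin (d + 1) => P i) (fun i => hP i) (fun i => hne i) (fun i => hsub i)
    (fun i j hij => hdisj fun e => hij (Fin.ext e)) (fun i => by rw [hrS]; exact hrk i)
  obtain ⟨m', e, ψ, -, hψ⟩ := exists_common_fiber hQ
  -- The parameters for which the chosen formulas give a partition into pieces of rank `c`.
  let V : Set (Fin m ⊕ Fin m' → M) :=
    (((⋂ i, (fun g : Fin m ⊕ Fin m' → M => g ∘ Sum.inr) ⁻¹'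
        {z : Fin m' → M | r.rk (fiber (ψ i) z) = (c : WithBot ℕ)}) ∩
      ((fun g : Fin m ⊕ Fin m' → M => g ∘ Sum.inl) ⁻¹'
        {y : Fin m → M | r.rk (fiber φ y) = (c : WithBot ℕ)})) ∩
      (⋂ p : {p : Fin (d + 1) × Fin (d + 1) // p.1 ≠ p.2},
        (fun g : Fin m ⊕ Fin m' → M => g ∘ Sum.inr) ⁻¹'
          {z : Fin m' → M | Disjoint (fiber (ψ p.1.1) z) (fiber (ψ p.1.2) z)})) ∩
      {v | (⋃ i, fiber (ψ i) (v ∘ Sum.inr)) = fiber φ (v ∘ Sum.inl)}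
  have hV : D.Definable L V :=
    (((definable_iInter_of_finite fun i => (h2 (ψ i) c).preimage_comp _).inter
      ((h2 φ c).preimage_comp _)).inter
      (definable_iInter_of_finite fun p => (definable_disjoint_fiber _ _).preimage_comp _)).inter
      (definable_iUnion_fiber_eq φ ψ)
  have hmem : a ∈ (fun g : Fin m ⊕ Fin m' → M => g ∘ Sum.inl) '' V := by
    refine ⟨Sum.elim a e, ⟨⟨⟨?_, ?_⟩, ?_⟩, ?_⟩, Sum.elim_comp_inl a e⟩
    · refine mem_iInter.2 fun i => ?_
      change r.rk (fiber (ψ i) (Sum.elim a e ∘ Sum.inr)) = _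
      rw [Sum.elim_comp_inr, ← hψ, hQrk, hrS]
    · change r.rk (fiber φ (Sum.elim a e ∘ Sum.inl)) = _
      rw [Sum.elim_comp_inl, hrS]
    · refine mem_iInter.2 fun p => ?_
      change Disjoint (fiber _ (Sum.elim a e ∘ Sum.inr)) (fiber _ (Sum.elim a e ∘ Sum.inr))
      rw [Sum.elim_comp_inr, ← hψ, ← hψ]
      exact hQdisj p.2
    · change (⋃ i, fiber (ψ i) (Sum.elim a e ∘ Sum.inr)) = fiber φ (Sum.elim a e ∘ Sum.inl)
      rw [Sum.elim_comp_inl, Sum.elim_comp_inr, ← hQU]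
      exact iUnion_congr fun i => (hψ i).symm
  obtain ⟨v, ⟨⟨⟨hv1, hv2⟩, hv3⟩, hv4⟩, rfl⟩ := hmin _ (hV.image_comp Sum.inl) hmem ha₀
  have hrv : ∀ i, r.rk (fiber (ψ i) (v ∘ Sum.inr)) = (c : WithBot ℕ) := fun i =>
    mem_iInter.1 hv1 i
  have hpart : r.IsRankPartition (fiber φ (v ∘ Sum.inl)) (d + 1) := by
    refine ⟨fun i => fiber (ψ i) (v ∘ Sum.inr), fun i => definable_fiber _ _ fun _ => mem_univ _,
      fun i => ?_, fun i => (hrv i).trans (Eq.symm hv2), fun i j hij => ?_, hv4⟩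
    · rw [nonempty_iff_ne_empty]
      intro he
      have := hrv i
      rw [show fiber (ψ i) (v ∘ Sum.inr) = ∅ from he, r.rk_empty] at this
      exact WithBot.natCast_ne_bot c this.symm
    · exact mem_iInter.1 hv3 ⟨(i, j), hij⟩
  exact absurd (hd _ hpart) (by omega)

end DegreeApproximation

/-! ### Restricting a rank to an elementary substructure -/

section Restriction

variable {N : L.ElementarySubstructure M}

/-- The points of `S ⊆ M ^ α` with coordinates in the elementary substructure `N`. -/
def trace (N : L.ElementarySubstructure M) {α : Type*} (S : Set (α → M)) : Set (α → N) :=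
  {x | (fun i => (x i : M)) ∈ S}

theorem trace_fiber {n m : ℕ} (φ : L.Formula (Fin n ⊕ Fin m)) (b : Fin m → N) :
    trace N (fiber φ fun j => (b j : M)) = fiber φ b := by
  ext x
  simp only [trace, fiber, mem_ofPred_eq]
  rw [← N.subtype.map_formula φ]
  refine iff_of_eq (congrArg _ ?_)
  ext i
  cases i <;> simp

theorem exists_trace {n : ℕ} {A : Set (Fin n → N)} (hA : (univ : Set N).Definable L A) :
    ∃ S : Set (Fin n → M), (N : Set M).Definable L S ∧ trace N S = A := by
  obtain ⟨m, b, φ, -, rfl⟩ := exists_fiber hA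
  exact ⟨_, definable_fiber φ _ fun j => (b j).2, trace_fiber φ b⟩

theorem definable_trace {n : ℕ} {S : Set (Fin n → M)} (hS : (N : Set M).Definable L S) :
    (univ : Set N).Definable L (trace N S) := by
  obtain ⟨m, b, φ, hb, rfl⟩ := exists_fiber hS
  rw [trace_fiber φ fun j => ⟨b j, hb j⟩]
  exact definable_fiber φ _ fun _ => mem_univ _

theorem trace_nonempty {n : ℕ} {S : Set (Fin n → M)} (hS : (N : Set M).Definable L S)
    (hne : S.Nonempty) : (trace N S).Nonempty := by
  obtain ⟨m, b, φ, hb, rfl⟩ := exists_fiber hS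
  obtain ⟨x, hx⟩ := hne
  let b' : Fin m → N := fun j => ⟨b j, hb j⟩
  let ψ : L.Formula (Fin m) := (φ.relabel Sum.swap).iExs (Fin n)
  have hψ : ψ.Realize (N.subtype ∘ b') := by
    refine Formula.realize_iExs.2 ⟨x, ?_⟩
    rw [Formula.realize_relabel]
    have hx2 : φ.Realize (Sum.elim x b) := hx
    convert! hx2 using 1
    ext i
    cases i <;> simp [b']
  rw [N.subtype.map_formula] at hψ
  obtain ⟨y, hy⟩ := Formula.realize_iExs.1 hψ
  rw [Formula.realize_relabel] at hy
  refine ⟨y, ?_⟩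
  rw [trace_fiber φ b']
  change φ.Realize _
  convert! hy using 1
  ext i
  cases i <;> simp

theorem subset_of_trace_subset {n : ℕ} {S S' : Set (Fin n → M)}
    (hS : (N : Set M).Definable L S) (hS' : (N : Set M).Definable L S')
    (h : trace N S ⊆ trace N S') : S ⊆ S' := by
  rw [← sdiff_eq_empty, ← not_nonempty_iff_eq_empty]
  intro hne
  obtain ⟨x, hx⟩ := trace_nonempty (hS.sdiff hS') hne
  exact hx.2 (h hx.1)

theorem trace_injective {n : ℕ} {S S' : Set (Fin n → M)}
    (hS : (N : Set M).Definable L S) (hS' : (N : Set M).Definable L S')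
    (h : trace N S = trace N S') : S = S' :=
  subset_antisymm (subset_of_trace_subset hS hS' h.subset)
    (subset_of_trace_subset hS' hS h.symm.subset)

open Classical in
/-- The value of the restricted rank at `A`: the rank of the set definable over `N` whose trace is
`A`, and `⊥` if there is none. -/
noncomputable def restrictRk (r : RankFunction L M) (N : L.ElementarySubstructure M) {n : ℕ}
    (A : Set (Fin n → N)) : WithBot ℕ :=
  if h : ∃ S : Set (Fin n → M), (N : Set M).Definable L S ∧ trace N S = A then
    r.rk h.choose else ⊥

theorem restrictRk_trace (r : RankFunction L M) {n : ℕ} {S : Set (Fin n → M)}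
    (hS : (N : Set M).Definable L S) : restrictRk r N (trace N S) = r.rk S := by
  have h : ∃ S' : Set (Fin n → M), (N : Set M).Definable L S' ∧ trace N S' = trace N S :=
    ⟨S, hS, rfl⟩
  rw [restrictRk, dif_pos h, trace_injective h.choose_spec.1 hS h.choose_spec.2]

/-- The restriction of a rank function to an elementary substructure. -/
noncomputable def restrict (r : RankFunction L M) (N : L.ElementarySubstructure M) :
    RankFunction L N where
  rk := restrictRk r N
  rk_empty n := by
    have h : (∅ : Set (Fin n → N)) = trace N ∅ := rfl
    rw [h, restrictRk_trace r definable_empty, r.rk_empty]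
  rk_ne_bot A hA hne := by
    obtain ⟨S, hS, rfl⟩ := exists_trace hA
    rw [restrictRk_trace r hS]
    obtain ⟨x, hx⟩ := hne
    exact r.rk_ne_bot S (hS.mono (subset_univ _)) ⟨_, hx⟩

theorem restrict_trace (r : RankFunction L M) {n : ℕ} {S : Set (Fin n → M)}
    (hS : (N : Set M).Definable L S) : (restrict r N).rk (trace N S) = r.rk S :=
  restrictRk_trace r hS

theorem restrict_fiber (r : RankFunction L M) {n m : ℕ} (φ : L.Formula (Fin n ⊕ Fin m))
    (b : Fin m → N) : (restrict r N).rk (fiber φ b) = r.rk (fiber φ fun j => (b j : M)) := by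
  rw [← trace_fiber, restrict_trace r (definable_fiber φ _ fun j => (b j).2)]

/-- A set definable over `N` with finite trace consists of points of `N`. -/
theorem eq_image_of_finite_trace {n : ℕ} {S : Set (Fin n → M)}
    (hS : (N : Set M).Definable L S) (hfin : (trace N S).Finite) :
    S = (fun (x : Fin n → N) i => (x i : M)) '' trace N S := by
  have : Finite (trace N S) := hfin
  have hT : (N : Set M).Definable L (⋃ x : trace N S, {fun i => (x.1 i : M)}) :=
    definable_iUnion_of_finite fun x => definable_singleton_tuple fun j => (x.1 j).2
  have hT' : (⋃ x : trace N S, {fun i => (x.1 i : M)}) =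
      (fun (x : Fin n → N) i => (x i : M)) '' trace N S := by
    ext y; simp [eq_comm]
  rw [hT'] at hT
  refine subset_antisymm (subset_of_trace_subset hS hT fun x hx => ⟨x, hx, rfl⟩) ?_
  rintro _ ⟨x, hx, rfl⟩
  exact hx

/-- A rank with degree approximation over `D` restricts to a `BP'`-rank on an elementary
substructure containing `D` that is atomic over `D`. -/
theorem restrict_isBP'Rank {r : RankFunction L M} {D : Set M} (h1 : r.Axiom1_1)
    (h : r.DegreeApprox D) (h2 : r.Axiom2 D) (h4 : r.Axiom4) (hDN : D ⊆ (N : Set M))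
    (hN : ∀ (m : ℕ) (b : Fin m → M), (∀ j, b j ∈ N) → Isolated L D b) :
    (restrict r N).IsBP'Rank (univ : Set N) := by
  refine ⟨?_, ?_, ?_, ?_⟩
  · intro n A B hA hB
    obtain ⟨S, hS, rfl⟩ := exists_trace hA
    obtain ⟨S', hS', rfl⟩ := exists_trace hB
    have hU : trace N S ∪ trace N S' = trace N (S ∪ S') := rfl
    rw [hU, restrict_trace r hS, restrict_trace r hS', restrict_trace r (hS.union hS')]
    exact h1 _ _ (hS.mono (subset_univ _)) (hS'.mono (subset_univ _))
  · rintro n A hA c ⟨P, hP, hne, hsub, hdisj, hrk⟩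
    obtain ⟨S, hS, rfl⟩ := exists_trace hA
    choose Q hQ hQP using fun i => exists_trace (hP i)
    obtain rfl : (fun i => trace N (Q i)) = P := funext hQP
    rw [restrict_trace r hS]
    refine succ_le_rk_of_isolated h1 h2 h hN hS Q hQ (fun i => ?_)
      (fun i => subset_of_trace_subset (hQ i) hS (hsub i)) (fun i j hij => ?_) (fun i => ?_)
    · obtain ⟨x, hx⟩ := hne i
      exact ⟨_, hx⟩
    · refine Set.disjoint_iff.2 ?_
      refine subset_of_trace_subset ((hQ i).inter (hQ j)) definable_empty ?_
      exact Set.disjoint_iff.1 (hdisj hij)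
    · have := hrk i
      rwa [restrict_trace r (hQ i)] at this
  · intro n m φ k
    have := definable_trace ((h2 φ k).mono hDN)
    convert! this using 1
    ext b
    rw [mem_ofPred_eq, restrict_fiber]
    rfl
  · intro n m φ
    obtain ⟨m₀, hm₀⟩ := h4 φ
    refine ⟨m₀, fun b hb => ?_⟩
    have hS := definable_fiber (L := L) φ (fun j => (b j : M)) (B := (N : Set M)) fun j => (b j).2
    have heq := eq_image_of_finite_trace hS (by rwa [trace_fiber])
    rw [trace_fiber] at heq
    have hfin : (fiber φ fun j => (b j : M)).Finite := by
      rw [heq]; exact hb.image _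
    refine lt_of_eq_of_lt ?_ (hm₀ _ hfin)
    rw [← ncard_eq_toFinset_card _ hb, ← ncard_eq_toFinset_card _ hfin, heq]
    refine (ncard_image_of_injective _ fun x y hxy => ?_).symm
    ext i
    exact congrFun hxy i

end Restriction

/-- A complete theory `T` in a countable language has a model carrying a
BP'-rank if and only if it has a model carrying a BP₀'-rank relative to some set of
parameters. -/
theorem hasBP'Rank_iff_hasBP0'Rank (L : FirstOrder.Language.{0, 0}) [Countable L.Symbols]
    (T : L.Theory) (hT : T.IsComplete) :
    (∃ (M : Theory.ModelType.{0, 0, 0} T) (r : RankFunction L M),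
      r.IsBP'Rank (Set.univ : Set M)) ↔
    ∃ (M : Theory.ModelType.{0, 0, 0} T) (r : RankFunction L M) (C : Set M),
      r.IsBP0'Rank C := by
  constructor
  · rintro ⟨M, r, h1, h12, h2, h4⟩
    exact ⟨M, r, univ, h1, fun A _ ⟨a, ha⟩ φ => ⟨a, ha, hasFiniteDegree_of_axiom1_2 h1 h12
      (definable_fiber φ a fun _ => mem_univ _)⟩, h2, h4⟩
  · rintro ⟨M, r, C, h1, h, h2, h4⟩
    obtain ⟨D, hDC, hcount, h2D⟩ := Axiom2.exists_countable h2
    have hD : r.DegreeApprox D := fun A hA => h A (hA.mono hDC)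
    obtain ⟨N, hDN, hN⟩ := (isolatedDense_of_degreeApprox h1 hD).exists_atomic hcount
    exact ⟨Theory.ModelType.of T N, restrict r N, restrict_isBP'Rank h1 hD h2D h4 hDN hN⟩

end BP
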